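/- Let m, m' ≥ 2 and n = m·m'. Then 3 · |{ c ∈ C : wt(c) = 2^{n−2} }| = 2 · ( (3·2^{m'} − 2)^m − 3·2^{n} + 2 ); equivalently, the number of minimum weight codewords of C is (2/3)·((3·2^{m'} − 2)^m − 3·2^{m·m'} + 2). -/

import Mathlib

/-- Monomial evaluation: `mon_S(α) = ∏_{i ∈ S} α i`. -/
def mon {n : ℕ} (S : Finset (Fin n)) : (Fin n → ZMod 2) → ZMod 2 :=
  fun x => ∏ i ∈ S, x i

/-- The Reed–Muller code `RM(r, n)` : span of the monomials of degree at most `r`. -/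
def RMcode (r n : ℕ) : Submodule (ZMod 2) ((Fin n → ZMod 2) → ZMod 2) :=
  Submodule.span (ZMod 2) {c | ∃ S : Finset (Fin n), S.card ≤ r ∧ c = mon S}

/-- The second-order recursive subproduct code `C = RM(1,m')^{⊗[2,m]}` of length `2^{m·m'}`:
span of the monomials `mon_S` with `|S| ≤ 2` and `|S ∩ Bᵢ| ≤ 1` for every block
`Bᵢ = {(i−1)·m', …, i·m'−1}` (an index `i : Fin (m·m')` lies in block `(i : ℕ) / m'`). -/
def Ccode (m m' : ℕ) : Submodule (ZMod 2) ((Fin (m * m') → ZMod 2) → ZMod 2) :=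
  Submodule.span (ZMod 2) {c | ∃ S : Finset (Fin (m * m')),
    S.card ≤ 2 ∧ (∀ b : ℕ, (S.filter fun i : Fin (m * m') => (i : ℕ) / m' = b).card ≤ 1) ∧ c = mon S}

/-- Hamming weight: the number of evaluation points where `c` takes the value `1`. -/
def wt {n : ℕ} (c : (Fin n → ZMod 2) → ZMod 2) : ℕ :=
  (Finset.univ.filter fun x => c x = 1).card

def chi (a : ZMod 2) : ℤ := if a = 0 then 1 else -1

lemma chi_add (a b : ZMod 2) : chi (a + b) = chi a * chi b := by
  revert a b; decide

lemma z2 (a : ZMod 2) : a = 0 ∨ a = 1 := by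
  revert a; decide

/-- affine function with linear part `g.1` and constant `g.2` -/
def ev {n : ℕ} (g : (Fin n → ZMod 2) × ZMod 2) (x : Fin n → ZMod 2) : ZMod 2 :=
  (∑ i, g.1 i * x i) + g.2

lemma ev_add {n : ℕ} (g h : (Fin n → ZMod 2) × ZMod 2) (x : Fin n → ZMod 2) :
    ev (g + h) x = ev g x + ev h x := by
  simp only [ev, Prod.fst_add, Prod.snd_add, Pi.add_apply, add_mul, Finset.sum_add_distrib]
  ring

lemma ev_one {n : ℕ} (x : Fin n → ZMod 2) :
    ev ((0, 1) : (Fin n → ZMod 2) × ZMod 2) x = 1 := by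
  simp [ev]

lemma ev_add_right {n : ℕ} (g : (Fin n → ZMod 2) × ZMod 2) (x y : Fin n → ZMod 2) :
    ev g (x + y) = ev g x + ev (g.1, 0) y := by
  simp only [ev, Pi.add_apply, mul_add, Finset.sum_add_distrib]
  ring

lemma sum_chi_ev {n : ℕ} (g : (Fin n → ZMod 2) × ZMod 2) (hg : g.1 ≠ 0) :
    ∑ x, chi (ev g x) = 0 := by
  obtain ⟨i, hi⟩ := Function.ne_iff.mp hg
  have hi1 : g.1 i = 1 := (z2 _).resolve_left hi
  have h := Equiv.sum_comp (Equiv.addRight (Pi.single i (1 : ZMod 2))) (fun x => chi (ev g x))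
  have h2 : ∀ x, chi (ev g (Equiv.addRight (Pi.single i (1 : ZMod 2)) x)) = - chi (ev g x) := by
    intro x
    rw [Equiv.coe_addRight, ev_add_right, chi_add]
    have : ev (g.1, 0) (Pi.single i (1 : ZMod 2)) = 1 := by
      simp [ev, Pi.single_apply, hi1]
    rw [this]
    have : chi 1 = -1 := by decide
    rw [this]; ring
  simp only [h2, Finset.sum_neg_distrib] at h
  linarith

lemma card_V (n : ℕ) : ∑ _x : Fin n → ZMod 2, (1 : ℤ) = 2 ^ n := by
  simp [ZMod.card]

lemma ind2 (a b : ZMod 2) : (4 : ℤ) * (if a * b = 1 then 1 else 0) =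
    1 - chi a - chi b + chi (a + b) := by
  revert a b; decide

lemma ind3 (a b c : ZMod 2) : (8 : ℤ) * (if a * b * c = 1 then 1 else 0) =
    1 - chi a - chi b - chi c + chi (a + b) + chi (a + c) + chi (b + c) - chi (a + b + c) := by
  revert a b c; decide

lemma wt_eq_sum {n : ℕ} (c : (Fin n → ZMod 2) → ZMod 2) :
    (wt c : ℤ) = ∑ x, if c x = 1 then 1 else 0 := by
  simp [wt]

/-- linear parts independent -/
def Ind {n : ℕ} (g h : (Fin n → ZMod 2) × ZMod 2) : Prop :=
  g.1 ≠ 0 ∧ h.1 ≠ 0 ∧ g.1 ≠ h.1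

lemma addself {n : ℕ} (u : Fin n → ZMod 2) : u + u = 0 := by
  ext i; exact CharTwo.add_self_eq_zero _

lemma add_ne {n : ℕ} {u v : Fin n → ZMod 2} : u + v ≠ 0 ↔ u ≠ v := by
  refine not_congr ⟨fun h => ?_, fun h => by rw [h, addself]⟩
  have := congrArg (· + v) h
  simpa [add_assoc, addself] using this

lemma wt2 {n : ℕ} (g h : (Fin n → ZMod 2) × ZMod 2) (hi : Ind g h) :
    4 * (wt (fun x => ev g x * ev h x) : ℤ) = 2 ^ n := by
  rw [wt_eq_sum, Finset.mul_sum]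
  simp only [ind2, Finset.sum_add_distrib, Finset.sum_sub_distrib, ← ev_add]
  rw [sum_chi_ev g hi.1, sum_chi_ev h hi.2.1, sum_chi_ev (g + h) (add_ne.2 hi.2.2), card_V]
  ring

lemma wt3 {n : ℕ} (g h k : (Fin n → ZMod 2) × ZMod 2) (hi : Ind g h) (hk : k.1 ≠ 0)
    (h1 : k.1 ≠ g.1) (h2 : k.1 ≠ h.1) (h3 : k.1 ≠ g.1 + h.1) :
    8 * (wt (fun x => ev g x * ev h x * ev k x) : ℤ) = 2 ^ n := by
  rw [wt_eq_sum, Finset.mul_sum]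
  simp only [ind3, Finset.sum_add_distrib, Finset.sum_sub_distrib, ← ev_add]
  rw [sum_chi_ev g hi.1, sum_chi_ev h hi.2.1, sum_chi_ev (g + h) (add_ne.2 hi.2.2), card_V,
    sum_chi_ev k hk, sum_chi_ev (g + k) (add_ne.2 h1.symm), sum_chi_ev (h + k) (add_ne.2 h2.symm),
    sum_chi_ev (g + h + k) (add_ne.2 h3.symm)]
  ring

lemma mul_idem (a b c d : ZMod 2) (h : a * b = c * d) : a * b * c = a * b := by
  revert a b c d; decide

/-- if `gh = kl` then `k ∈ {g, h, g+h+1}` -/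
lemma fiber_mem {n : ℕ} (g h k l : (Fin n → ZMod 2) × ZMod 2) (hi : Ind g h) (hk : k.1 ≠ 0)
    (he : ∀ x, ev g x * ev h x = ev k x * ev l x) :
    k = g ∨ k = h ∨ k = g + h + (0, 1) := by
  have hpos : (0 : ℤ) < 2 ^ n := by positivity
  have w2 := wt2 g h hi
  have hx : ∃ x, ev g x * ev h x = 1 := by
    by_contra hcon
    push Not at hcon
    rw [wt_eq_sum] at w2
    simp [hcon] at w2
    omega
  obtain ⟨x, hx⟩ := hx
  have hkx : ev k x = 1 ∧ ev g x = 1 ∧ ev h x = 1 := by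
    have h1 := he x
    revert hx h1
    generalize ev g x = a
    generalize ev h x = b
    generalize ev k x = c
    generalize ev l x = d
    revert a b c d; decide
  have h1 : k.1 = g.1 ∨ k.1 = h.1 ∨ k.1 = g.1 + h.1 := by
    by_contra hcon
    push Not at hcon
    have w3 := wt3 g h k hi hk hcon.1 hcon.2.1 hcon.2.2
    have : (fun x => ev g x * ev h x * ev k x) = fun x => ev g x * ev h x := by
      ext x; exact mul_idem _ _ _ _ (he x)
    rw [this] at w3
    omega
  have key : ∀ r : (Fin n → ZMod 2) × ZMod 2, k.1 = r.1 → ev r x = 1 → k = r := by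
    intro r hr hr1
    refine Prod.ext hr ?_
    have := hkx.1
    rw [← hr1] at this
    simpa [ev, hr] using this
  rcases h1 with h1 | h1 | h1
  · exact Or.inl (key g h1 hkx.2.1)
  · exact Or.inr (Or.inl (key h h1 hkx.2.2))
  · refine Or.inr (Or.inr (key _ (by simpa using h1) ?_))
    rw [ev_add, ev_add, ev_one, hkx.2.1, hkx.2.2]; decide

lemma fiber_ext {n : ℕ} (g h k l : (Fin n → ZMod 2) × ZMod 2) (hi : Ind g h) :
    (Ind k l ∧ ∀ x, ev g x * ev h x = ev k x * ev l x) ↔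
    (k, l) ∈ ({(g, h), (h, g), (g, g + h + (0, 1)), (g + h + (0, 1), g),
      (h, g + h + (0, 1)), (g + h + (0, 1), h)} :
      Finset (((Fin n → ZMod 2) × ZMod 2) × ((Fin n → ZMod 2) × ZMod 2))) := by
  constructor
  · rintro ⟨hkl, he⟩
    have h1 := fiber_mem g h k l hi hkl.1 he
    have h2 := fiber_mem g h l k hi hkl.2.1 (fun x => by rw [he x, mul_comm])
    have hne : k ≠ l := fun h => hkl.2.2 (congrArg Prod.fst h)
    simp only [Finset.mem_insert, Finset.mem_singleton, Prod.mk.injEq]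
    rcases h1 with h1 | h1 | h1 <;> rcases h2 with h2 | h2 | h2 <;>
      first
      | (exfalso; apply hne; rw [h1, h2]; done)
      | simp only [h1, h2, and_self, true_or, or_true]
  · have a1 : ∀ a b : ZMod 2, a * b = a * (a + b + 1) := by decide
    have a2 : ∀ a b : ZMod 2, a * b = b * (a + b + 1) := by decide
    obtain ⟨i1, i2, i3⟩ := hi
    have i4 : g.1 + h.1 ≠ 0 := add_ne.2 i3
    have i5 : g.1 + h.1 ≠ g.1 := by simpa using i2
    have i6 : g.1 + h.1 ≠ h.1 := by simpa using i1
    intro hm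
    simp only [Finset.mem_insert, Finset.mem_singleton, Prod.mk.injEq] at hm
    rcases hm with ⟨rfl, rfl⟩ | ⟨rfl, rfl⟩ | ⟨rfl, rfl⟩ | ⟨rfl, rfl⟩ | ⟨rfl, rfl⟩ | ⟨rfl, rfl⟩
    · exact ⟨⟨i1, i2, i3⟩, fun x => rfl⟩
    · exact ⟨⟨i2, i1, i3.symm⟩, fun x => mul_comm _ _⟩
    · refine ⟨⟨i1, by simpa using i4, by simpa using i2⟩, fun x => ?_⟩
      simp only [ev_add, ev_one]; exact a1 _ _
    · refine ⟨⟨by simpa using i4, i1, by simpa using i2⟩, fun x => ?_⟩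
      simp only [ev_add, ev_one]; rw [mul_comm (_ + _)]; exact a1 _ _
    · refine ⟨⟨i2, by simpa using i4, by simpa using i1⟩, fun x => ?_⟩
      simp only [ev_add, ev_one]; exact a2 _ _
    · refine ⟨⟨by simpa using i4, i2, by simpa using i1⟩, fun x => ?_⟩
      simp only [ev_add, ev_one]; rw [mul_comm (_ + _)]; exact a2 _ _

lemma fiber_card {n : ℕ} (g h : (Fin n → ZMod 2) × ZMod 2) (hi : Ind g h) :
    ({(g, h), (h, g), (g, g + h + (0, 1)), (g + h + (0, 1), g),
      (h, g + h + (0, 1)), (g + h + (0, 1), h)} :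
      Finset (((Fin n → ZMod 2) × ZMod 2) × ((Fin n → ZMod 2) × ZMod 2))).card = 6 := by
  obtain ⟨i1, i2, i3⟩ := hi
  have j1 : g ≠ h := fun h => i3 (congrArg Prod.fst h)
  have j2 : g + h + (0, 1) ≠ g := fun e => i2 (by simpa using congrArg Prod.fst e)
  have j3 : g + h + (0, 1) ≠ h := fun e => i1 (by simpa using congrArg Prod.fst e)
  generalize g + h + (0, 1) = k at *
  repeat rw [Finset.card_insert_of_notMem]
  · simp
  all_goals
    simp only [Finset.mem_insert, Finset.mem_singleton, Prod.mk.injEq]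
    grind

/-- pairs with vanishing minors -/
lemma minors_iff {ι : Type*} (p q : ι → ZMod 2) :
    (∀ i j, p i * q j = p j * q i) ↔ (p = 0 ∨ q = 0 ∨ p = q) := by
  constructor
  · intro h
    by_contra hcon
    push Not at hcon
    obtain ⟨h1, h2, h3⟩ := hcon
    obtain ⟨i, hi⟩ := Function.ne_iff.mp h1
    obtain ⟨j, hj⟩ := Function.ne_iff.mp h2
    have hi1 : p i = 1 := (z2 _).resolve_left hi
    have hj1 : q j = 1 := (z2 _).resolve_left hj
    have h4 := h i j
    rw [hi1, hj1] at h4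
    have hqi : q i = 1 := by
      rcases z2 (q i) with h | h
      · rw [h] at h4; simp at h4
      · exact h
    apply h3
    ext k
    have := h i k
    rw [hi1, hqi] at this
    simpa using this.symm
  · rintro (h | h | h) i j
    · simp [h]
    · simp [h]
    · rw [h, mul_comm]

lemma card_dep {ι : Type*} [Fintype ι] [DecidableEq ι] :
    (((Finset.univ : Finset ((ι → ZMod 2) × (ι → ZMod 2))).filter
      (fun z => z.1 = 0 ∨ z.2 = 0 ∨ z.1 = z.2)).card : ℤ) = 3 * 2 ^ Fintype.card ι - 2 := by
  have h : ∀ z : (ι → ZMod 2) × (ι → ZMod 2),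
      (if (z.1 = 0 ∨ z.2 = 0 ∨ z.1 = z.2) then (1 : ℤ) else 0) =
      (if z.1 = 0 then 1 else 0) + (if z.2 = 0 then 1 else 0) + (if z.1 = z.2 then 1 else 0)
       - 2 * (if z.1 = 0 then (if z.2 = 0 then 1 else 0) else 0) := by
    intro z
    by_cases h1 : z.1 = 0 <;> by_cases h2 : z.2 = 0 <;> by_cases h3 : z.1 = z.2 <;>
      simp_all
  rw [Finset.card_filter]
  push_cast
  simp only [h, Fintype.sum_prod_type, Finset.sum_sub_distrib, Finset.sum_add_distrib,
    ← Finset.mul_sum]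
  have s1 : ∑ x : ι → ZMod 2, ∑ _y : ι → ZMod 2, (if x = 0 then (1 : ℤ) else 0) =
      2 ^ Fintype.card ι := by
    rw [Finset.sum_comm]
    simp [ZMod.card]
  rw [s1]
  simp [ZMod.card]
  ring

def BB {n : ℕ} (f : (Fin n → ZMod 2) → ZMod 2) (x y : Fin n → ZMod 2) : ZMod 2 :=
  f (x + y) + f x + f y + f 0

lemma third {m m' : ℕ} {f : (Fin (m * m') → ZMod 2) → ZMod 2} (hf : f ∈ Ccode m m')
    (x y z : Fin (m * m') → ZMod 2) : BB f x (y + z) = BB f x y + BB f x z := by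
  unfold Ccode at hf
  induction hf using Submodule.span_induction with
  | mem f hf =>
    obtain ⟨S, hS, -, rfl⟩ := hf
    have : S.card = 0 ∨ S.card = 1 ∨ S.card = 2 := by omega
    rcases this with h | h | h
    · rw [Finset.card_eq_zero] at h; subst h
      simp [BB, mon]; decide
    · obtain ⟨a, rfl⟩ := Finset.card_eq_one.1 h
      simp only [BB, mon, Finset.prod_singleton, Pi.add_apply, Pi.zero_apply]
      generalize x a = p
      generalize y a = q
      generalize z a = r
      revert p q r; decide
    · obtain ⟨a, b, hab, rfl⟩ := Finset.card_eq_two.1 h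
      simp only [BB, mon, Finset.prod_pair hab, Pi.add_apply, Pi.zero_apply]
      generalize x a = p
      generalize y a = q
      generalize z a = r
      generalize x b = p'
      generalize y b = q'
      generalize z b = r'
      revert p q r p' q' r'; decide
  | zero => simp [BB]
  | add f g _ _ hf hg =>
    have h : ∀ x y, BB (f + g) x y = BB f x y + BB g x y := by
      intro x y; simp only [BB, Pi.add_apply]; ring
    rw [h, h, h, hf, hg]; ring
  | smul a f _ hf =>
    have h : ∀ x y, BB (a • f) x y = a * BB f x y := by
      intro x y; simp only [BB, Pi.smul_apply, smul_eq_mul]; ring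
    rw [h, h, h, hf]; ring

lemma BB_comm {n : ℕ} (f : (Fin n → ZMod 2) → ZMod 2) (x y) : BB f x y = BB f y x := by
  simp only [BB, add_comm x y]; ring

lemma lin_ev {n : ℕ} (φ : (Fin n → ZMod 2) → ZMod 2) (h : ∀ x y, φ (x + y) = φ x + φ y) :
    ∀ x, φ x = ev (fun i => φ (Pi.single i 1), 0) x := by
  intro x
  let ψ : (Fin n → ZMod 2) →ₗ[ZMod 2] ZMod 2 :=
    AddMonoidHom.toZModLinearMap 2 (AddMonoidHom.mk' φ h)
  have hx : φ x = ψ x := rfl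
  rw [hx, LinearMap.pi_apply_eq_sum_univ ψ x]
  simp only [ev, smul_eq_mul, add_zero]
  refine Finset.sum_congr rfl fun i _ => ?_
  rw [mul_comm]
  congr 1
  show φ _ = φ _
  congr 1
  ext j
  simp [Pi.single_apply, eq_comm]

lemma classify {n : ℕ} (hn : 2 ≤ n) (f : (Fin n → ZMod 2) → ZMod 2)
    (hB : ∀ x y z, BB f x (y + z) = BB f x y + BB f x z) (hw : wt f = 2 ^ (n - 2)) :
    ∃ g h, Ind g h ∧ f = fun x => ev g x * ev h x := by
  classical
  set N : ℕ := 2 ^ (n - 2) with hN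
  have hNpos : 0 < N := by positivity
  have h4 : (2 : ℤ) ^ n = 4 * N := by
    rw [hN]; push_cast
    conv_lhs => rw [show n = 2 + (n - 2) by omega, pow_add]
    norm_num
  have hlin : ∀ y x, BB f y x = ev (fun i => BB f y (Pi.single i 1), 0) x :=
    fun y => lin_ev _ (hB y)
  let R : Finset (Fin n → ZMod 2) := Finset.univ.filter fun y => ∀ x, BB f y x = 0
  have hR : ∀ y, y ∈ R ↔ ∀ x, BB f y x = 0 := by intro y; simp [R]
  -- full character sum
  have hF : ∑ x, chi (f x) = 2 * N := by
    have h1 : ∀ a : ZMod 2, chi a = 1 - 2 * (if a = 1 then 1 else 0) := by decide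
    have h2 : ∑ x, chi (f x) = ∑ x, (1 - 2 * (if f x = 1 then 1 else 0) : ℤ) :=
      Finset.sum_congr rfl fun x _ => h1 (f x)
    rw [h2, Finset.sum_sub_distrib, ← Finset.mul_sum, ← wt_eq_sum, card_V, h4, hw]
    ring
  have hin : ∀ y, ∑ x, chi (BB f y x) = if y ∈ R then 4 * (N : ℤ) else 0 := by
    intro y
    split_ifs with h
    · rw [hR] at h
      simp only [h]
      rw [← h4, ← card_V]; rfl
    · rw [Finset.sum_congr rfl fun x _ => congrArg chi (hlin y x)]
      apply sum_chi_ev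
      intro h0
      apply h
      rw [hR]
      intro x
      rw [hlin y x]
      have h0' : (fun i => BB f y (Pi.single i 1)) = 0 := h0
      rw [h0']; simp [ev]
  have hsq : (∑ x, chi (f x)) ^ 2 = 4 * N * ∑ y ∈ R, chi (f y + f 0) := by
    have e1 : (∑ x, chi (f x)) ^ 2 = ∑ x, ∑ y, chi (f x) * chi (f (x + y)) := by
      rw [sq, Finset.sum_mul]
      refine Finset.sum_congr rfl fun x _ => ?_
      rw [← Finset.mul_sum]
      congr 1
      exact (Equiv.sum_comp (Equiv.addLeft x) (fun y => chi (f y))).symm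
    rw [e1, Finset.sum_comm]
    have e2 : ∀ y x, chi (f x) * chi (f (x + y)) = chi (f y + f 0) * chi (BB f y x) := by
      intro y x
      rw [← chi_add, ← chi_add]
      congr 1
      simp only [BB, add_comm y x]
      generalize f (x + y) = a
      generalize f x = b
      generalize f y = c
      generalize f 0 = d
      revert a b c d; decide
    simp only [e2, ← Finset.mul_sum, hin]
    rw [Finset.mul_sum]
    simp only [mul_ite, mul_zero, Finset.sum_ite_mem, Finset.univ_inter]
    exact Finset.sum_congr rfl fun y _ => by ring
  have hS : ∑ y ∈ R, chi (f y + f 0) = N := by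
    rw [hF] at hsq
    have hp : (4 * (N : ℤ)) ≠ 0 := by positivity
    apply mul_left_cancel₀ hp
    rw [← hsq]; ring
  have hshift : ∀ y ∈ R, ∀ x, f (x + y) = f x + (f y + f 0) := by
    intro y hy x
    have := (hR y).1 hy x
    simp only [BB, add_comm y x] at this
    revert this
    generalize f (x + y) = a
    generalize f x = b
    generalize f y = c
    generalize f 0 = d
    revert a b c d; decide
  have hself : ∀ y : Fin n → ZMod 2, ∀ x, x + y + y = x := by
    intro y x; rw [add_assoc, addself, add_zero]
  have hRadd : ∀ y ∈ R, ∀ z ∈ R, y + z ∈ R := by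
    intro y hy z hz
    rw [hR] at *
    intro x
    rw [BB_comm, hB, BB_comm f x y, BB_comm f x z, hy, hz, add_zero]
  have hconst : ∀ y ∈ R, f y + f 0 = 0 := by
    intro y hy
    by_contra hne
    have hne1 : f y + f 0 = 1 := (z2 _).resolve_left hne
    have : ∑ z ∈ R, chi (f z + f 0) = ∑ z ∈ R, - chi (f z + f 0) := by
      refine Finset.sum_nbij' (fun z => z + y) (fun z => z + y) ?_ ?_ ?_ ?_ ?_
      · intro z hz; exact hRadd z hz y hy
      · intro z hz; exact hRadd z hz y hy
      · intro z _; exact hself y z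
      · intro z _; exact hself y z
      · intro z _
        rw [hshift y hy z, hne1]
        generalize f z = a
        generalize f 0 = b
        revert a b; decide
    rw [Finset.sum_neg_distrib, hS] at this
    omega
  have hRcard : R.card = N := by
    have : ∑ y ∈ R, chi (f y + f 0) = ∑ y ∈ R, (1 : ℤ) :=
      Finset.sum_congr rfl fun y hy => by rw [hconst y hy]; rfl
    rw [hS] at this
    simp at this
    exact this.symm
  -- nondegenerate pair
  obtain ⟨y1, y2, hy⟩ : ∃ y1 y2, BB f y1 y2 = 1 := by
    by_contra hcon
    push Not at hcon
    have : R = Finset.univ := by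
      ext y
      simp only [hR, Finset.mem_univ, iff_true]
      intro x
      exact (z2 _).resolve_right (hcon y x)
    have h5 : (R.card : ℤ) = 2 ^ n := by
      rw [this, ← card_V]; simp
    rw [h4, hRcard] at h5
    omega
  have hBself : ∀ y, BB f y y = 0 := by
    intro y
    simp only [BB, addself]
    generalize f y = a
    generalize f 0 = b
    revert a b; decide
  obtain ⟨x0, hx0⟩ : ∃ x0, f x0 = 1 := by
    by_contra hcon
    push Not at hcon
    have : wt f = 0 := by simp [wt, hcon]
    omega
  let g : (Fin n → ZMod 2) × ZMod 2 := (fun i => BB f y1 (Pi.single i 1), BB f y1 x0 + 1)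
  let h : (Fin n → ZMod 2) × ZMod 2 := (fun i => BB f y2 (Pi.single i 1), BB f y2 x0 + 1)
  have hg : ∀ x, ev g x = BB f y1 x + (BB f y1 x0 + 1) := by
    intro x; rw [hlin y1 x]; simp [ev, g]
  have hh : ∀ x, ev h x = BB f y2 x + (BB f y2 x0 + 1) := by
    intro x; rw [hlin y2 x]; simp [ev, h]
  have hi : Ind g h := by
    refine ⟨fun e => ?_, fun e => ?_, fun e => ?_⟩
    · have := hlin y1 y2
      change g.1 = 0 at e
      change _ = ev (g.1, 0) y2 at this
      rw [e, hy] at this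
      simp [ev] at this
    · have := hlin y2 y1
      change _ = ev (h.1, 0) y1 at this
      rw [e, BB_comm, hy] at this
      simp [ev] at this
    · have t1 := hlin y1 y2
      have t2 := hlin y2 y2
      change _ = ev (g.1, 0) y2 at t1
      change _ = ev (h.1, 0) y2 at t2
      rw [e, ← t2, hBself, hy] at t1
      simp at t1
  refine ⟨g, h, hi, ?_⟩
  let X := R.image (fun y => x0 + y)
  have hX : X.card = N := by
    rw [Finset.card_image_of_injective _ (add_right_injective x0), hRcard]
  have hXf : X = Finset.univ.filter fun x => f x = 1 := by
    apply Finset.eq_of_subset_of_card_le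
    · intro x hx
      simp only [X, Finset.mem_image] at hx
      obtain ⟨y, hy, rfl⟩ := hx
      simp [hshift y hy, hconst y hy, hx0]
    · rw [hX]; exact hw.le
  have hXg : X = Finset.univ.filter fun x => ev g x * ev h x = 1 := by
    apply Finset.eq_of_subset_of_card_le
    · intro x hx
      simp only [X, Finset.mem_image] at hx
      obtain ⟨y, hy, rfl⟩ := hx
      have hy' := (hR y).1 hy
      simp only [Finset.mem_filter, Finset.mem_univ, true_and]
      rw [hg, hh, hB, hB, BB_comm f y1 y, BB_comm f y2 y, hy', hy']
      generalize BB f y1 x0 = a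
      generalize BB f y2 x0 = b
      revert a b; decide
    · rw [hX]
      have := wt2 g h hi
      rw [h4] at this
      have h6 : wt (fun x => ev g x * ev h x) ≤ N := by omega
      exact h6
  ext x
  have : (f x = 1) ↔ (ev g x * ev h x = 1) := by
    have := hXf.symm.trans hXg
    have := Finset.ext_iff.1 this x
    simpa using this
  revert this
  generalize f x = a
  generalize ev g x * ev h x = b
  revert a b; decide

def blk {m m' : ℕ} (i : Fin (m * m')) : ℕ := (i : ℕ) / m'

lemma mon_mem {m m' : ℕ} (S : Finset (Fin (m * m'))) (h1 : S.card ≤ 2)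
    (h2 : ∀ i ∈ S, ∀ j ∈ S, blk i = blk j → i = j) : mon S ∈ Ccode m m' := by
  apply Submodule.subset_span
  refine ⟨S, h1, fun b => ?_, rfl⟩
  rw [Finset.card_le_one]
  intro i hi j hj
  simp only [Finset.mem_filter] at hi hj
  exact h2 i hi.1 j hj.1 (hi.2.trans hj.2.symm)

lemma one_mem_C {m m' : ℕ} : (fun _ => 1) ∈ Ccode m m' := by
  have := mon_mem (m := m) (m' := m') ∅ (by simp) (by simp)
  convert this using 1
  ext x; simp [mon]

lemma coord_mem_C {m m' : ℕ} (i : Fin (m * m')) : (fun x => x i) ∈ Ccode m m' := by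
  have := mon_mem (m := m) (m' := m') {i} (by simp) (by simp)
  convert this using 1
  ext x; simp [mon]

lemma pair_mem_C {m m' : ℕ} (i j : Fin (m * m')) (h : blk i ≠ blk j) :
    (fun x => x i * x j) ∈ Ccode m m' := by
  have hij : i ≠ j := fun e => h (by rw [e])
  have := mon_mem (m := m) (m' := m') {i, j} (Finset.card_le_two) (by
    simp only [Finset.mem_insert, Finset.mem_singleton]
    rintro a (rfl | rfl) b (rfl | rfl) hab
    · rfl
    · exact absurd hab h
    · exact absurd hab.symm h
    · rfl)
  convert this using 1
  ext x; simp [mon, Finset.prod_pair hij]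

lemma lin_mem_C {m m' : ℕ} (g : (Fin (m * m') → ZMod 2) × ZMod 2) : ev g ∈ Ccode m m' := by
  have : ev g = ∑ i, g.1 i • (fun x : Fin (m * m') → ZMod 2 => x i) + g.2 • (fun _ => 1) := by
    ext x; simp [ev, Finset.sum_apply]
  rw [this]
  exact Submodule.add_mem _ (Submodule.sum_mem _ fun i _ => Submodule.smul_mem _ _ (coord_mem_C i))
    (Submodule.smul_mem _ _ one_mem_C)

lemma prod_mem_C {m m' : ℕ} (g h : (Fin (m * m') → ZMod 2) × ZMod 2)
    (hb : ∀ i j, blk i = blk j → g.1 i * h.1 j = g.1 j * h.1 i) :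
    (fun x => ev g x * ev h x) ∈ Ccode m m' := by
  classical
  have hq : (fun x : Fin (m * m') → ZMod 2 => (∑ i, g.1 i * x i) * (∑ j, h.1 j * x j))
      ∈ Ccode m m' := by
    have e : (fun x : Fin (m * m') → ZMod 2 => (∑ i, g.1 i * x i) * (∑ j, h.1 j * x j)) =
        (∑ p : Fin (m * m') × Fin (m * m'), if blk p.1 = blk p.2 then 0 else
          (g.1 p.1 * h.1 p.2) • (fun x : Fin (m * m') → ZMod 2 => x p.1 * x p.2)) +
        ∑ i, (g.1 i * h.1 i) • (fun x : Fin (m * m') → ZMod 2 => x i) := by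
      ext x
      rw [Finset.sum_mul_sum, ← Finset.univ_product_univ, ← Finset.sum_product']
      simp only [Pi.add_apply, Finset.sum_apply, Pi.smul_apply, smul_eq_mul]
      have hz : ∑ p : Fin (m * m') × Fin (m * m'), (if blk p.1 = blk p.2 ∧ p.1 ≠ p.2 then
          g.1 p.1 * x p.1 * (h.1 p.2 * x p.2) else 0) = 0 := by
        apply Finset.sum_involution (fun p _ => (p.2, p.1))
        · intro p _
          by_cases hp : blk p.1 = blk p.2 ∧ p.1 ≠ p.2
          · have hp' : blk p.2 = blk p.1 ∧ p.2 ≠ p.1 := ⟨hp.1.symm, hp.2.symm⟩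
            rw [if_pos hp, if_pos hp']
            have := hb _ _ hp.1
            have e2 : g.1 p.2 * x p.2 * (h.1 p.1 * x p.1) =
                g.1 p.1 * x p.1 * (h.1 p.2 * x p.2) := by
              linear_combination (-x p.1 * x p.2) * this
            rw [e2]; exact CharTwo.add_self_eq_zero _
          · have hp' : ¬ (blk p.2 = blk p.1 ∧ p.2 ≠ p.1) :=
              fun q => hp ⟨q.1.symm, q.2.symm⟩
            rw [if_neg hp, if_neg hp', add_zero]
        · intro p _ hne heq
          have : p.2 = p.1 := congrArg Prod.fst heq
          simp [this] at hne
        · intro p _; exact Finset.mem_univ _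
        · intro p _; rfl
      have hd : ∑ i, g.1 i * h.1 i * x i = ∑ p : Fin (m * m') × Fin (m * m'),
          (if p.1 = p.2 then g.1 p.1 * x p.1 * (h.1 p.2 * x p.2) else 0) := by
        rw [Fintype.sum_prod_type]
        refine Finset.sum_congr rfl fun i _ => ?_
        simp only [Finset.sum_ite_eq, Finset.mem_univ, if_true]
        generalize g.1 i = a
        generalize h.1 i = b
        generalize x i = c
        revert a b c; decide
      rw [hd, Finset.univ_product_univ]
      refine Eq.trans ?_ ((congrArg (fun t => _ + t) hz).trans (add_zero _))
      rw [← Finset.sum_add_distrib, ← Finset.sum_add_distrib]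
      refine Finset.sum_congr rfl fun p _ => ?_
      by_cases h1 : p.1 = p.2
      · simp [h1]
      · by_cases h2 : blk p.1 = blk p.2
        · simp [h1, h2]
        · simp [h1, h2]; ring
    rw [e]
    refine Submodule.add_mem _ (Submodule.sum_mem _ fun p _ => ?_)
      (Submodule.sum_mem _ fun i _ => Submodule.smul_mem _ _ (coord_mem_C i))
    split_ifs with hp
    · exact Submodule.zero_mem _
    · exact Submodule.smul_mem _ _ (pair_mem_C _ _ hp)
  have e : (fun x => ev g x * ev h x) =
      (fun x : Fin (m * m') → ZMod 2 => (∑ i, g.1 i * x i) * (∑ j, h.1 j * x j)) +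
      g.2 • ev h + h.2 • ev (g.1, 0) := by
    ext x; simp [ev]; ring
  rw [e]
  exact Submodule.add_mem _ (Submodule.add_mem _ hq (Submodule.smul_mem _ _ (lin_mem_C h)))
    (Submodule.smul_mem _ _ (lin_mem_C _))

lemma second_zero {m m' : ℕ} {f : (Fin (m * m') → ZMod 2) → ZMod 2} (hf : f ∈ Ccode m m')
    (i j : Fin (m * m')) (hij : i ≠ j) (hb : blk i = blk j) :
    BB f (Pi.single i 1) (Pi.single j 1) = 0 := by
  unfold Ccode at hf
  induction hf using Submodule.span_induction with
  | mem f hf =>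
    obtain ⟨S, hS, hS2, rfl⟩ := hf
    have key : ∀ a ∈ S, ∀ b ∈ S, blk a = blk b → a = b := by
      intro a ha b hb' hab
      exact Finset.card_le_one.1 (hS2 (blk b)) a
        (Finset.mem_filter.2 ⟨ha, hab⟩) b (Finset.mem_filter.2 ⟨hb', rfl⟩)
    have : S.card = 0 ∨ S.card = 1 ∨ S.card = 2 := by omega
    rcases this with h | h | h
    · rw [Finset.card_eq_zero] at h; subst h
      simp [BB, mon]; decide
    · obtain ⟨a, rfl⟩ := Finset.card_eq_one.1 h
      simp only [BB, mon, Finset.prod_singleton, Pi.add_apply, Pi.zero_apply]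
      generalize (Pi.single i 1 : Fin (m * m') → ZMod 2) a = p
      generalize (Pi.single j 1 : Fin (m * m') → ZMod 2) a = q
      revert p q; decide
    · obtain ⟨a, b, hab, rfl⟩ := Finset.card_eq_two.1 h
      simp only [BB, mon, Finset.prod_pair hab, Pi.add_apply, Pi.zero_apply]
      have h1 : (Pi.single i 1 : Fin (m * m') → ZMod 2) a *
          (Pi.single j 1 : Fin (m * m') → ZMod 2) b = 0 := by
        by_cases ha : a = i
        · by_cases hb' : b = j
          · exfalso; subst ha; subst hb'
            exact hab (key _ (by simp) _ (by simp) hb)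
          · simp [Pi.single_apply, hb']
        · simp [Pi.single_apply, ha]
      have h2 : (Pi.single j 1 : Fin (m * m') → ZMod 2) a *
          (Pi.single i 1 : Fin (m * m') → ZMod 2) b = 0 := by
        by_cases ha : a = j
        · by_cases hb' : b = i
          · exfalso; subst ha; subst hb'
            exact hab (key _ (by simp) _ (by simp) hb.symm)
          · simp [Pi.single_apply, hb']
        · simp [Pi.single_apply, ha]
      revert h1 h2
      generalize (Pi.single i 1 : Fin (m * m') → ZMod 2) a = p
      generalize (Pi.single j 1 : Fin (m * m') → ZMod 2) a = q
      generalize (Pi.single i 1 : Fin (m * m') → ZMod 2) b = p'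
      generalize (Pi.single j 1 : Fin (m * m') → ZMod 2) b = q'
      revert p q p' q'; decide
  | zero => simp [BB]
  | add f g _ _ hf hg =>
    have h : ∀ x y, BB (f + g) x y = BB f x y + BB g x y := by
      intro x y; simp only [BB, Pi.add_apply]; ring
    rw [h, hf, hg]; ring
  | smul a f _ hf =>
    have h : ∀ x y, BB (a • f) x y = a * BB f x y := by
      intro x y; simp only [BB, Pi.smul_apply, smul_eq_mul]; ring
    rw [h, hf]; ring

lemma prod_mem_iff {m m' : ℕ} (g h : (Fin (m * m') → ZMod 2) × ZMod 2) :
    (fun x => ev g x * ev h x) ∈ Ccode m m' ↔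
    (∀ i j, blk i = blk j → g.1 i * h.1 j = g.1 j * h.1 i) := by
  refine ⟨fun hf i j hb => ?_, prod_mem_C g h⟩
  by_cases hij : i = j
  · rw [hij]
  have := second_zero hf i j hij hb
  have e0 : ∀ r : (Fin (m * m') → ZMod 2) × ZMod 2, ev r 0 = r.2 := by intro r; simp [ev]
  have e1 : ∀ (r : (Fin (m * m') → ZMod 2) × ZMod 2) k,
    ev r (Pi.single k 1) = r.1 k + r.2 := by intro r k; simp [ev, Pi.single_apply]
  have e2 : ∀ (r : (Fin (m * m') → ZMod 2) × ZMod 2),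
    ev r (Pi.single i 1 + Pi.single j 1) = r.1 i + r.1 j + r.2 := by
    intro r; simp [ev, Pi.single_apply, mul_add, Finset.sum_add_distrib]
  simp only [BB, e0, e1, e2] at this
  revert this
  generalize g.1 i = a
  generalize g.1 j = b
  generalize h.1 i = c
  generalize h.1 j = d
  generalize g.2 = e
  generalize h.2 = f
  revert a b c d e f; decide

lemma card_block (m m' : ℕ) (hm' : 0 < m') [DecidablePred fun z : (Fin (m * m') → ZMod 2) × (Fin (m * m') → ZMod 2) =>
      ∀ i j, blk i = blk j → z.1 i * z.2 j = z.1 j * z.2 i] :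
    (((Finset.univ : Finset ((Fin (m * m') → ZMod 2) × (Fin (m * m') → ZMod 2))).filter
      (fun z => ∀ i j, blk i = blk j → z.1 i * z.2 j = z.1 j * z.2 i)).card : ℤ) =
      (3 * 2 ^ m' - 2) ^ m := by
  classical
  let Q : Finset ((Fin m' → ZMod 2) × (Fin m' → ZMod 2)) :=
    Finset.univ.filter (fun z => z.1 = 0 ∨ z.2 = 0 ∨ z.1 = z.2)
  have hQ : (Q.card : ℤ) = 3 * 2 ^ m' - 2 := by
    have := card_dep (ι := Fin m')
    rw [Fintype.card_fin] at this
    exact this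
  have hpi : (Fintype.piFinset (fun _ : Fin m => Q)).card = Q.card ^ m := by
    simp
  rw [← hQ]
  have : ∀ a b : ℕ, a = b → (a : ℤ) = b := by intro a b h; rw [h]
  rw [← Nat.cast_pow, ← hpi]
  apply this
  have hblk : ∀ (a : Fin m) (b : Fin m'), blk (finProdFinEquiv (a, b)) = a := by
    intro a b
    simp only [blk, finProdFinEquiv_apply_val]
    rw [Nat.add_mul_div_left _ _ hm', Nat.div_eq_of_lt b.2, zero_add]
  refine Finset.card_nbij'
    (fun z a => (fun b => z.1 (finProdFinEquiv (a, b)), fun b => z.2 (finProdFinEquiv (a, b))))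
    (fun w => (fun i => (w (finProdFinEquiv.symm i).1).1 (finProdFinEquiv.symm i).2,
      fun i => (w (finProdFinEquiv.symm i).1).2 (finProdFinEquiv.symm i).2)) ?_ ?_ ?_ ?_
  · intro z hz
    simp only [Finset.coe_filter, Finset.mem_univ, true_and, Set.mem_ofPred_eq] at hz
    simp only [Finset.mem_coe, Fintype.mem_piFinset]
    intro a
    simp only [Q, Finset.mem_filter, Finset.mem_univ, true_and]
    rw [← minors_iff]
    intro b c
    exact hz _ _ (by rw [hblk, hblk])
  · intro w hw
    simp only [Finset.mem_coe, Fintype.mem_piFinset] at hw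
    simp only [Finset.coe_filter, Finset.mem_univ, true_and, Set.mem_ofPred_eq]
    intro i j hij
    obtain ⟨⟨a, b⟩, rfl⟩ := finProdFinEquiv.surjective i
    obtain ⟨⟨c, d⟩, rfl⟩ := finProdFinEquiv.surjective j
    rw [hblk, hblk] at hij
    have hac : a = c := Fin.ext hij
    subst hac
    simp only [Equiv.symm_apply_apply]
    have := hw a
    simp only [Q, Finset.mem_filter, Finset.mem_univ, true_and] at this
    exact (minors_iff _ _).2 this b d
  · intro z _
    simp only [Prod.mk.eta, Equiv.apply_symm_apply]
  · intro w _
    simp only [Equiv.symm_apply_apply]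

/-- the number of minimum weight codewords of `C` is
`(2/3)·((3·2^{m'} − 2)^m − 3·2^{m·m'} + 2)`. -/
theorem stmt_10 (m m' : ℕ) (hm : 2 ≤ m) (hm' : 2 ≤ m') :
    3 * (Nat.card {c : (Fin (m * m') → ZMod 2) → ZMod 2 //
        c ∈ Ccode m m' ∧ wt c = 2 ^ (m * m' - 2)} : ℤ) =
      2 * ((3 * 2 ^ m' - 2) ^ m - 3 * 2 ^ (m * m') + 2) := by
  classical
  have hn : 2 ≤ m * m' := by nlinarith
  let T : Finset ((Fin (m * m') → ZMod 2) → ZMod 2) :=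
    Finset.univ.filter fun c => c ∈ Ccode m m' ∧ wt c = 2 ^ (m * m' - 2)
  have hT : Nat.card {c : (Fin (m * m') → ZMod 2) → ZMod 2 //
        c ∈ Ccode m m' ∧ wt c = 2 ^ (m * m' - 2)} = T.card := by
    rw [Nat.card_eq_fintype_card, Fintype.card_subtype]
  rw [hT]
  let A := (Fin (m * m') → ZMod 2) × ZMod 2
  let D : Finset (A × A) := Finset.univ.filter fun p =>
    Ind p.1 p.2 ∧ (fun x => ev p.1 x * ev p.2 x) ∈ Ccode m m'
  let F : A × A → ((Fin (m * m') → ZMod 2) → ZMod 2) := fun p x => ev p.1 x * ev p.2 x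
  have hDT : ∀ p ∈ D, F p ∈ T := by
    intro p hp
    simp only [D, Finset.mem_filter, Finset.mem_univ, true_and] at hp
    simp only [T, Finset.mem_filter, Finset.mem_univ, true_and]
    refine ⟨hp.2, ?_⟩
    have := wt2 _ _ hp.1
    have h4 : (2 : ℤ) ^ (m * m') = 4 * 2 ^ (m * m' - 2) := by
      conv_lhs => rw [show m * m' = 2 + (m * m' - 2) by omega, pow_add]
      norm_num
    rw [h4] at this
    have h5 := mul_left_cancel₀ (by norm_num) this
    exact_mod_cast h5
  have hfib : ∀ c ∈ T, (D.filter fun p => F p = c).card = 6 := by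
    intro c hc
    simp only [T, Finset.mem_filter, Finset.mem_univ, true_and] at hc
    obtain ⟨g, h, hi, rfl⟩ := classify hn c (third hc.1) hc.2
    rw [← fiber_card g h hi]
    congr 1
    ext ⟨k, l⟩
    rw [← fiber_ext g h k l hi]
    simp only [D, F, Finset.mem_filter, Finset.mem_univ, true_and]
    constructor
    · rintro ⟨⟨h1, _⟩, h3⟩
      exact ⟨h1, fun x => (congrFun h3 x).symm⟩
    · rintro ⟨h1, h2⟩
      have h3 : (fun x => ev k x * ev l x) = fun x => ev g x * ev h x := by
        ext x; exact (h2 x).symm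
      exact ⟨⟨h1, by rw [h3]; exact hc.1⟩, h3⟩
  have hD6 : D.card = T.card * 6 := by
    rw [Finset.card_eq_sum_card_fiberwise (f := F) (t := T) hDT, Finset.sum_const_nat hfib]
  -- counting D
  let V := Fin (m * m') → ZMod 2
  let P : Finset (V × V) := Finset.univ.filter
      (fun z => ∀ i j, blk i = blk j → z.1 i * z.2 j = z.1 j * z.2 i)
  let E : Finset (V × V) := Finset.univ.filter (fun z => z.1 = 0 ∨ z.2 = 0 ∨ z.1 = z.2)
  have hP : (P.card : ℤ) = (3 * 2 ^ m' - 2) ^ m := card_block m m' (by omega)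
  have hE : (E.card : ℤ) = 3 * 2 ^ (m * m') - 2 := by
    have := card_dep (ι := Fin (m * m'))
    rw [Fintype.card_fin] at this
    exact this
  have hEP : E ⊆ P := by
    intro z hz
    simp only [E, P, Finset.mem_filter, Finset.mem_univ, true_and] at *
    intro i j _
    exact (minors_iff _ _).2 hz i j
  have hPE : ((P \ E).card : ℤ) = P.card - E.card := by
    rw [Finset.card_sdiff_of_subset hEP, Nat.cast_sub (Finset.card_le_card hEP)]
  have hD : D.card = ((P \ E) ×ˢ (Finset.univ : Finset (ZMod 2 × ZMod 2))).card := by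
    refine Finset.card_nbij' (fun p => ((p.1.1, p.2.1), (p.1.2, p.2.2)))
      (fun q => ((q.1.1, q.2.1), (q.1.2, q.2.2))) ?_ ?_ (fun _ _ => rfl) (fun _ _ => rfl)
    · intro p hp
      simp only [D, Finset.coe_filter, Finset.mem_univ, true_and, Set.mem_ofPred_eq,
        prod_mem_iff] at hp
      simp only [P, E, Finset.mem_coe, Finset.mem_product, Finset.mem_sdiff, Finset.mem_filter,
        Finset.mem_univ, true_and, and_true]
      refine ⟨hp.2, ?_⟩
      have := hp.1
      unfold Ind at this
      tauto
    · intro q hq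
      simp only [P, E, Finset.mem_coe, Finset.mem_product, Finset.mem_sdiff, Finset.mem_filter,
        Finset.mem_univ, true_and, and_true] at hq
      simp only [D, Finset.coe_filter, Finset.mem_univ, true_and, Set.mem_ofPred_eq,
        prod_mem_iff]
      refine ⟨?_, hq.1⟩
      have := hq.2
      unfold Ind
      tauto
  rw [Finset.card_product] at hD
  have h4 : (Finset.univ : Finset (ZMod 2 × ZMod 2)).card = 4 := by decide
  rw [h4, hD6] at hD
  have hD' : (T.card : ℤ) * 6 = (P \ E).card * 4 := by exact_mod_cast hD
  rw [hPE, hP, hE] at hD'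
  linarith
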